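/- Let f(z, z̄) and g(z, z̄) be complex polynomials in z and z̄ with no common zeros, with deg f ≥ deg g. Let d = deg f and let T(z, z̄) be the homogeneous component of f of degree d. Assume |T(z, z̄)| → ∞ as |z| → ∞. Let R : ℂ̄ → ℂ̄ be the continuous map defined by R(z) = f(z,z̄)/g(z,z̄) when g(z,z̄) ≠ 0, R(z) = ∞ when g(z,z̄) = 0, and R(∞) = lim_{|z|→∞} f/g. Then the degree of R equals the winding number about 0 of the loop α ↦ T(e^{iα}, e^{-iα}), α ∈ [0, 2π]. -/

import Mathlib

open Complex Topology unitInterval Filter OnePoint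
open scoped OnePoint

/-- The standard map of degree `n` on the Riemann sphere `ℂ̄ = ℂ ∪ {∞}`
(identified with `S²` via stereographic projection): for `n > 0` it is `z ↦ zⁿ`,
for `n = 0` the constant map `1`, and for `n < 0` it is `z ↦ (conj z)^(-n)`,
each sending `∞ ↦ ∞` (for `n ≠ 0`). -/
noncomputable def stdSphereMap (n : ℤ) : OnePoint ℂ → OnePoint ℂ := fun z =>
  OnePoint.rec (if n = 0 then ((1 : ℂ) : OnePoint ℂ) else (∞ : OnePoint ℂ))
    (fun w =>
      if n = 0 then ((1 : ℂ) : OnePoint ℂ)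
      else if 0 < n then ((w ^ n.toNat : ℂ) : OnePoint ℂ)
      else (((starRingEnd ℂ) w ^ (-n).toNat : ℂ) : OnePoint ℂ)) z

/-- `R : ℂ̄ → ℂ̄` has topological degree `n`: by Hopf's theorem this holds iff `R` is
(freely) homotopic to the standard degree-`n` map; the degree is the integer corresponding
to the homotopy class of `R` under `π₂(S²) ≅ ℤ`, the identity map having degree `1`. -/
def HasDegree (R : OnePoint ℂ → OnePoint ℂ) (n : ℤ) : Prop :=
  ∃ H : OnePoint ℂ × I → OnePoint ℂ, Continuous H ∧
    (∀ z, H (z, 0) = R z) ∧ (∀ z, H (z, 1) = stdSphereMap n z)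

/-- Evaluation of a polynomial `f(z, z̄)` in `z` and `z̄` at the point `z ∈ ℂ`
(the first variable gets `z`, the second gets `z̄`). -/
noncomputable def evalZZbar (f : MvPolynomial (Fin 2) ℂ) (z : ℂ) : ℂ :=
  MvPolynomial.eval ![z, (starRingEnd ℂ) z] f

/-- The continuous loop `γ : [0, 2π] → ℂ \ {0}` has winding number `n` about `0`:
there is a continuous choice of argument `θ` along the loop whose total increment
is `2πn` (counterclockwise loops get positive winding numbers). -/
def IsWindingNumber (γ : ℝ → ℂ) (n : ℤ) : Prop :=
  ∃ θ : ℝ → ℝ, ContinuousOn θ (Set.Icc 0 (2 * Real.pi)) ∧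
    (∀ t ∈ Set.Icc 0 (2 * Real.pi),
      γ t = (‖γ t‖ : ℂ) * Complex.exp ((θ t : ℂ) * Complex.I)) ∧
    θ (2 * Real.pi) - θ 0 = 2 * Real.pi * (n : ℝ)


/-- The point `[a : b]` of the Riemann sphere. -/
noncomputable def toP (a b : ℂ) : OnePoint ℂ :=
  if b = 0 then (∞ : OnePoint ℂ) else ((a / b : ℂ) : OnePoint ℂ)

lemma toP_zero (a : ℂ) : toP a 0 = ∞ := by simp [toP]

lemma toP_of_ne {a b : ℂ} (h : b ≠ 0) : toP a b = ((a / b : ℂ) : OnePoint ℂ) := by simp [toP, h]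

lemma toP_one (a : ℂ) : toP a 1 = (a : OnePoint ℂ) := by simp [toP]

lemma toP_smul {c : ℂ} (hc : c ≠ 0) (a b : ℂ) : toP (c * a) (c * b) = toP a b := by
  by_cases hb : b = 0
  · simp [toP, hb]
  · simp [toP, hb, hc, mul_div_mul_left]

lemma toP_div {a b : ℂ} (ha : a ≠ 0) : toP a b = toP 1 (b / a) := by
  rw [← toP_smul ha 1 (b / a), mul_one, mul_div_cancel₀ _ ha]

lemma toP_eq_iff {a b a' b' : ℂ} (h : toP a b = toP a' b') : a * b' = a' * b := by
  unfold toP at h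
  split_ifs at h with hb hb' hb'
  · simp [hb, hb']
  · exact absurd h (OnePoint.infty_ne_coe _)
  · exact absurd h (OnePoint.coe_ne_infty _)
  · rw [OnePoint.coe_eq_coe] at h
    field_simp at h
    linear_combination h

lemma continuousAt_toP {p : ℂ × ℂ} (hp : ¬(p.1 = 0 ∧ p.2 = 0)) :
    ContinuousAt (fun q : ℂ × ℂ => toP q.1 q.2) p := by
  by_cases hb : p.2 = 0
  · have ha : p.1 ≠ 0 := fun h => hp ⟨h, hb⟩
    unfold ContinuousAt
    simp only [hb, toP_zero]
    rw [OnePoint.hasBasis_nhds_infty.tendsto_right_iff]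
    rintro s ⟨-, hs⟩
    obtain ⟨r, hr⟩ := hs.isBounded.exists_norm_le
    have h1 : Tendsto (fun q : ℂ × ℂ => ‖q.1‖ - (|r| + 1) * ‖q.2‖) (𝓝 p)
        (𝓝 (‖p.1‖ - (|r| + 1) * ‖p.2‖)) := by
      apply Continuous.tendsto; fun_prop
    have h2 : 0 < ‖p.1‖ - (|r| + 1) * ‖p.2‖ := by simp [hb, ha]
    filter_upwards [h1.eventually (lt_mem_nhds h2)] with q hq
    by_cases hq2 : q.2 = 0
    · right; simp [hq2, toP_zero]
    · left
      refine ⟨q.1 / q.2, fun hm => ?_, (toP_of_ne hq2).symm⟩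
      have := hr _ hm
      rw [norm_div, div_le_iff₀ (norm_pos_iff.2 hq2)] at this
      have h3 : 0 < ‖q.2‖ := norm_pos_iff.2 hq2
      nlinarith [le_abs_self r]
  · have h1 : ContinuousAt (fun q : ℂ × ℂ => ((q.1 / q.2 : ℂ) : OnePoint ℂ)) p := by
      apply OnePoint.continuous_coe.continuousAt.comp
      exact continuousAt_fst.div continuousAt_snd hb
    refine h1.congr ?_
    have : ∀ᶠ q : ℂ × ℂ in 𝓝 p, q.2 ≠ 0 := continuousAt_snd.eventually_ne hb
    filter_upwards [this] with q hq
    rw [toP_of_ne hq]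

/-- The homotopy given by homogeneous coordinates. -/
noncomputable def sph (F G : ℂ × I → ℂ) (c : I → ℂ) (p : OnePoint ℂ × I) : OnePoint ℂ :=
  p.1.elim (toP 1 (c p.2)) (fun z => toP (F (z, p.2)) (G (z, p.2)))

lemma continuous_sph {F G : ℂ × I → ℂ} {c : I → ℂ} (hF : Continuous F) (hG : Continuous G)
    (hc : Continuous c) (hne : ∀ p, ¬(F p = 0 ∧ G p = 0))
    (hF0 : ∀ t, ∀ᶠ p in cocompact ℂ ×ˢ 𝓝 t, F p ≠ 0)
    (hlim : ∀ t, Tendsto (fun p => G p / F p) (cocompact ℂ ×ˢ 𝓝 t) (𝓝 (c t))) :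
    Continuous (sph F G c) := by
  have hc1 : Continuous (fun t => toP 1 (c t)) := by
    rw [continuous_iff_continuousAt]
    intro t
    exact ContinuousAt.comp (f := fun t => ((1 : ℂ), c t)) (g := fun q : ℂ × ℂ => toP q.1 q.2)
      (continuousAt_toP (by simp)) (by fun_prop)
  rw [continuous_iff_continuousAt]
  rintro ⟨x, t⟩
  induction x using OnePoint.rec with
  | infty =>
    unfold ContinuousAt
    rw [nhds_prod_eq, OnePoint.nhds_infty_eq, Filter.sup_prod, tendsto_sup]
    constructor
    · rw [Filter.coclosedCompact_eq_cocompact, Filter.prod_map_left, tendsto_map'_iff]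
      have h1 : Tendsto (fun p : ℂ × I => toP 1 (G p / F p)) (cocompact ℂ ×ˢ 𝓝 t)
          (𝓝 (toP 1 (c t))) := by
        have := (continuousAt_toP (p := (1, c t)) (by simp)).tendsto
        exact this.comp (tendsto_const_nhds.prodMk_nhds (hlim t))
      refine h1.congr' ?_
      filter_upwards [hF0 t] with p hp
      simp [sph, toP_div hp]
    · rw [Filter.pure_prod, tendsto_map'_iff]
      exact hc1.tendsto t
  | coe z =>
    have he : IsOpenEmbedding (fun p : ℂ × I => ((p.1 : OnePoint ℂ), p.2)) :=
      OnePoint.isOpenEmbedding_coe.prodMap IsOpenEmbedding.id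
    rw [← he.continuousAt_iff (x := (z, t))]
    exact ContinuousAt.comp (f := fun p => (F p, G p)) (g := fun q : ℂ × ℂ => toP q.1 q.2)
      (continuousAt_toP (hne _)) (by fun_prop)

/-- Continuous logarithm on simply connected spaces. -/
lemma exists_clog {A : Type*} [TopologicalSpace A] [SimplyConnectedSpace A]
    [LocallyPathConnectedSpace A] (q : A → ℂ) (hq : Continuous q) (h0 : ∀ a, q a ≠ 0) :
    ∃ l : A → ℂ, Continuous l ∧ ∀ a, Complex.exp (l a) = q a := by
  obtain ⟨a₀⟩ : Nonempty A := inferInstance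
  obtain ⟨F, ⟨-, hF⟩, -⟩ := IsCoveringMapOn.existsUnique_continuousMap_lifts
    Complex.isCoveringMapOn_exp (⟨q, hq⟩ : C(A, ℂ)) (a₀ := a₀) (e₀ := Complex.log (q a₀))
    (by simpa using Complex.exp_log (h0 a₀)) (by simpa using h0)
  exact ⟨F, F.continuous, fun a => congrFun hF a⟩

/-- A nonvanishing continuous function on the plane has trivial winding on the circle. -/
lemma zpow_eq_zero_of_extends (q : ℂ → ℂ) (hq : Continuous q) (h0 : ∀ a, q a ≠ 0) (k : ℤ)
    (h : ∀ u : ℂ, ‖u‖ = 1 → q u = u ^ k) : k = 0 := by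
  obtain ⟨l, hl, hle⟩ := exists_clog q hq h0
  have h1 : ∀ s : ℝ, ∃ m : ℤ, l (Complex.exp (s * Complex.I)) =
      k * (s * Complex.I) + m * (2 * Real.pi * Complex.I) := by
    intro s
    rw [← Complex.exp_eq_exp_iff_exists_int, hle, h _ (Complex.norm_exp_ofReal_mul_I s),
      ← Complex.exp_int_mul]
  let φ : ℝ → ℝ := fun s => ((l (Complex.exp (s * Complex.I))).im - k * s) / (2 * Real.pi)
  have hφ : Continuous φ := by
    have : Continuous (fun s : ℝ => Complex.exp (s * Complex.I)) := by fun_prop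
    fun_prop
  have hφi : ∀ s, ∃ m : ℤ, φ s = m := by
    intro s
    obtain ⟨m, hm⟩ := h1 s
    refine ⟨m, ?_⟩
    simp only [φ, hm]
    have : Real.pi ≠ 0 := Real.pi_ne_zero
    simp
  choose M hM using hφi
  have hMc : Continuous M := by
    rw [Int.isClosedEmbedding_coe_real.isEmbedding.continuous_iff]
    exact hφ.congr hM
  have hMM : M 0 = M (2 * Real.pi) := PreconnectedSpace.constant inferInstance hMc
  have h2 : φ 0 = φ (2 * Real.pi) := by rw [hM, hM, hMM]
  simp only [φ] at h2
  have hp : (0:ℝ) < 2 * Real.pi := Real.two_pi_pos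
  rw [div_left_inj' hp.ne'] at h2
  push_cast at h2
  rw [Complex.exp_two_pi_mul_I] at h2
  simp only [zero_mul, Complex.exp_zero, mul_zero, sub_zero] at h2
  have h3 : (k : ℝ) * (2 * Real.pi) = 0 := by linarith
  have h4 : (k : ℝ) = 0 := by
    rcases mul_eq_zero.1 h3 with h | h
    · exact h
    · exact absurd h hp.ne'
  exact_mod_cast h4

/-- entries of the orthogonal projection to the line represented by a point of the sphere -/
noncomputable def prD (x : OnePoint ℂ) : ℂ := x.elim 0 (fun w => ((1 / (1 + ‖w‖ ^ 2) : ℝ) : ℂ))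
noncomputable def prB (x : OnePoint ℂ) : ℂ := x.elim 0 (fun w => w * ((1 / (1 + ‖w‖ ^ 2) : ℝ) : ℂ))

lemma tendsto_inv_norm : Tendsto (fun w : ℂ => 1 / ‖w‖) (cocompact ℂ) (𝓝 0) := by
  simp only [one_div]
  exact tendsto_inv_atTop_zero.comp tendsto_norm_cocompact_atTop

lemma continuous_prD : Continuous prD := by
  rw [OnePoint.continuous_iff]
  have hpos : ∀ w : ℂ, (1 + ‖w‖ ^ 2) ≠ 0 := fun w => by positivity
  constructor
  · rw [Filter.coclosedCompact_eq_cocompact]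
    refine squeeze_zero_norm' ?_ tendsto_inv_norm
    filter_upwards [(tendsto_norm_cocompact_atTop (E := ℂ)).eventually_ge_atTop 1] with w hw
    simp only [prD, OnePoint.elim_some]
    rw [Complex.norm_real, Real.norm_of_nonneg (by positivity)]
    apply one_div_le_one_div_of_le (by linarith); nlinarith
  · simp only [prD, OnePoint.elim_some]
    exact Complex.continuous_ofReal.comp (by fun_prop (disch := exact hpos _))

lemma continuous_prB : Continuous prB := by
  rw [OnePoint.continuous_iff]
  have hpos : ∀ w : ℂ, (1 + ‖w‖ ^ 2) ≠ 0 := fun w => by positivity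
  constructor
  · rw [Filter.coclosedCompact_eq_cocompact]
    refine squeeze_zero_norm' ?_ tendsto_inv_norm
    filter_upwards [(tendsto_norm_cocompact_atTop (E := ℂ)).eventually_ge_atTop 1] with w hw
    simp only [prB, OnePoint.elim_some]
    rw [norm_mul, Complex.norm_real, Real.norm_of_nonneg (by positivity), mul_one_div,
      div_le_div_iff₀ (by positivity) (by positivity)]
    nlinarith
  · simp only [prB, OnePoint.elim_some]
    exact continuous_id.mul (Complex.continuous_ofReal.comp (by fun_prop (disch := exact hpos _)))

/-- The trace of the product of two projections. -/
noncomputable def prT (x y : OnePoint ℂ) : ℂ :=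
  (1 - prD x) * (1 - prD y) + prB x * (starRingEnd ℂ) (prB y) +
    (starRingEnd ℂ) (prB x) * prB y + prD x * prD y

lemma prT_comm (x y : OnePoint ℂ) : prT x y = prT y x := by unfold prT; ring

lemma prT_self (y : OnePoint ℂ) : prT y y = 1 := by
  induction y using OnePoint.rec with
  | infty => simp [prT, prD, prB]
  | coe w =>
    simp only [prT, prD, prB, OnePoint.elim_some, map_mul, Complex.conj_ofReal]
    have e1 : (1 + (w * (starRingEnd ℂ) w)) ≠ 0 := by
      rw [Complex.mul_conj']; norm_cast; positivity
    push_cast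
    rw [← Complex.mul_conj']
    field_simp
    ring

lemma continuous_prT {X : Type*} [TopologicalSpace X] {f g : X → OnePoint ℂ}
    (hf : Continuous f) (hg : Continuous g) : Continuous (fun p => prT (f p) (g p)) := by
  have f1 := continuous_prD.comp hf
  have f2 := continuous_prB.comp hf
  have g1 := continuous_prD.comp hg
  have g2 := continuous_prB.comp hg
  have cc := Complex.continuous_conj
  exact ((((continuous_const.sub f1).mul (continuous_const.sub g1)).add
    (f2.mul (cc.comp g2))).add ((cc.comp f2).mul g2)).add (f1.mul g1)

/-- coordinates of the projection -/
noncomputable def prX (x : OnePoint ℂ) (a b : ℂ) : ℂ := (1 - prD x) * a + prB x * b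
noncomputable def prY (x : OnePoint ℂ) (a b : ℂ) : ℂ := (starRingEnd ℂ) (prB x) * a + prD x * b

lemma prX_coe (w a b : ℂ) : prX w a b =
    w * (((starRingEnd ℂ) w * a + b) * ((1 / (1 + ‖w‖ ^ 2) : ℝ) : ℂ)) := by
  have h : (1 + (w * (starRingEnd ℂ) w)) ≠ 0 := by
    rw [Complex.mul_conj']; norm_cast; positivity
  simp only [prX, prD, prB, OnePoint.elim_some]
  push_cast
  rw [← Complex.mul_conj']
  field_simp
  ring

lemma prY_coe (w a b : ℂ) : prY w a b =
    (((starRingEnd ℂ) w * a + b) * ((1 / (1 + ‖w‖ ^ 2) : ℝ) : ℂ)) := by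
  simp only [prY, prD, prB, OnePoint.elim_some, map_mul, Complex.conj_ofReal]
  ring

lemma toP_pr {x : OnePoint ℂ} {a b : ℂ} (h : ¬(prX x a b = 0 ∧ prY x a b = 0)) :
    toP (prX x a b) (prY x a b) = x := by
  induction x using OnePoint.rec with
  | infty => simp [prY, prD, prB, toP_zero]
  | coe w =>
    rw [prX_coe, prY_coe] at *
    set v := (((starRingEnd ℂ) w * a + b) * ((1 / (1 + ‖w‖ ^ 2) : ℝ) : ℂ))
    have : v ≠ 0 := by rintro h0; apply h; simp [h0]
    rw [toP_of_ne this, mul_div_cancel_right₀ _ this]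

lemma pr_ne {x : OnePoint ℂ} {a b : ℂ} (hab : ¬(a = 0 ∧ b = 0)) (ht : prT (toP a b) x ≠ 0) :
    ¬(prX x a b = 0 ∧ prY x a b = 0) := by
  rintro ⟨h1, h2⟩
  apply ht
  induction x using OnePoint.rec with
  | infty =>
    simp [prX, prD, prB] at h1
    have hb : b ≠ 0 := fun h => hab ⟨h1, h⟩
    subst h1
    rw [toP_of_ne hb]
    simp [prT, prD, prB]
  | coe w =>
    rw [prY_coe] at h2
    have h3 : ((1 / (1 + ‖w‖ ^ 2) : ℝ) : ℂ) ≠ 0 := by norm_cast; positivity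
    have h4 : (starRingEnd ℂ) w * a + b = 0 :=
      (mul_eq_zero.1 h2).resolve_right h3
    by_cases hb : b = 0
    · subst hb
      have ha : a ≠ 0 := fun h => hab ⟨h, rfl⟩
      have hw : w = 0 := by simpa [ha] using h4
      subst hw
      simp [toP_zero, prT, prD, prB]
    · rw [toP_of_ne hb]
      set y := a / b
      have hy : (starRingEnd ℂ) w * y = -1 := by
        simp only [y]; field_simp; linear_combination h4
      have hy' : w * (starRingEnd ℂ) y = -1 := by
        have := congrArg (starRingEnd ℂ) hy
        simpa using this
      have e1 : (1 + (w * (starRingEnd ℂ) w)) ≠ 0 := by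
        rw [Complex.mul_conj']; norm_cast; positivity
      have e2 : (1 + (y * (starRingEnd ℂ) y)) ≠ 0 := by
        rw [Complex.mul_conj']; norm_cast; positivity
      simp only [prT, prD, prB, OnePoint.elim_some, map_mul, Complex.conj_ofReal]
      push_cast
      rw [← Complex.mul_conj', ← Complex.mul_conj']
      field_simp
      linear_combination (1 + w * (starRingEnd ℂ) y) * hy

/-- `S` has lifts on the two charts, whose ratio on the equator is `u ^ (-n)`. -/
def HasLifts (S : OnePoint ℂ → OnePoint ℂ) (n : ℤ) : Prop :=
  ∃ a₀ b₀ a₁ b₁ : ℂ → ℂ, Continuous a₀ ∧ Continuous b₀ ∧ Continuous a₁ ∧ Continuous b₁ ∧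
    (∀ z, ¬(a₀ z = 0 ∧ b₀ z = 0)) ∧ (∀ z, ¬(a₁ z = 0 ∧ b₁ z = 0)) ∧
    (∀ z, toP (a₀ z) (b₀ z) = S (z : OnePoint ℂ)) ∧
    (∀ z, toP (a₁ z) (b₁ z) = S (toP 1 ((starRingEnd ℂ) z))) ∧
    ∀ u : ℂ, ‖u‖ = 1 → a₁ u = u ^ (-n) * a₀ u ∧ b₁ u = u ^ (-n) * b₀ u

lemma continuous_toP_conj : Continuous (fun z : ℂ => toP 1 ((starRingEnd ℂ) z)) := by
  rw [continuous_iff_continuousAt]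
  intro z
  have : Continuous (fun z : ℂ => ((1 : ℂ), (starRingEnd ℂ) z)) := by
    have := Complex.continuous_conj
    fun_prop
  exact ContinuousAt.comp (f := fun z : ℂ => ((1 : ℂ), (starRingEnd ℂ) z))
    (g := fun q : ℂ × ℂ => toP q.1 q.2) (continuousAt_toP (by simp)) this.continuousAt

lemma HasLifts.of_close {S S' : OnePoint ℂ → OnePoint ℂ} {n : ℤ} (hS' : Continuous S')
    (h : HasLifts S n) (hc : ∀ x, prT (S x) (S' x) ≠ 0) : HasLifts S' n := by
  obtain ⟨a₀, b₀, a₁, b₁, ca0, cb0, ca1, cb1, h0, h1, e0, e1, hu⟩ := h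
  have cc := Complex.continuous_conj
  have cD := continuous_prD
  have cB := continuous_prB
  have k0 : Continuous (fun z : ℂ => S' z) := hS'.comp OnePoint.continuous_coe
  have k1 : Continuous (fun z : ℂ => S' (toP 1 ((starRingEnd ℂ) z))) :=
    hS'.comp continuous_toP_conj
  have n0 : ∀ z : ℂ, ¬(prX (S' z) (a₀ z) (b₀ z) = 0 ∧ prY (S' z) (a₀ z) (b₀ z) = 0) :=
    fun z => pr_ne (h0 z) (by rw [e0]; exact hc _)
  have n1 : ∀ z, ¬(prX (S' (toP 1 ((starRingEnd ℂ) z))) (a₁ z) (b₁ z) = 0 ∧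
      prY (S' (toP 1 ((starRingEnd ℂ) z))) (a₁ z) (b₁ z) = 0) :=
    fun z => pr_ne (h1 z) (by rw [e1]; exact hc _)
  refine ⟨fun z => prX (S' z) (a₀ z) (b₀ z), fun z => prY (S' z) (a₀ z) (b₀ z),
    fun z => prX (S' (toP 1 ((starRingEnd ℂ) z))) (a₁ z) (b₁ z),
    fun z => prY (S' (toP 1 ((starRingEnd ℂ) z))) (a₁ z) (b₁ z), ?_, ?_, ?_, ?_, n0, n1,
    fun z => toP_pr (n0 z), fun z => toP_pr (n1 z), ?_⟩
  · exact ((continuous_const.sub (cD.comp k0)).mul ca0).add ((cB.comp k0).mul cb0)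
  · exact ((cc.comp (cB.comp k0)).mul ca0).add ((cD.comp k0).mul cb0)
  · exact ((continuous_const.sub (cD.comp k1)).mul ca1).add ((cB.comp k1).mul cb1)
  · exact ((cc.comp (cB.comp k1)).mul ca1).add ((cD.comp k1).mul cb1)
  · intro u hu1
    have hu0 : u ≠ 0 := by rintro rfl; simp at hu1
    have hE : toP 1 ((starRingEnd ℂ) u) = (u : OnePoint ℂ) := by
      rw [toP_of_ne (by simpa using hu0)]
      congr 1
      have : u * (starRingEnd ℂ) u = 1 := by rw [Complex.mul_conj', hu1]; simp
      rw [div_eq_iff (by simpa using hu0), this]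
    simp only [hE, (hu u hu1).1, (hu u hu1).2, prX, prY]
    constructor <;> ring

lemma HasLifts.of_homotopy (H : OnePoint ℂ × I → OnePoint ℂ) (hH : Continuous H) (n : ℤ)
    (h : HasLifts (fun z => H (z, 0)) n) : HasLifts (fun z => H (z, 1)) n := by
  have key : IsLocallyConstant (fun t : I => HasLifts (fun z => H (z, t)) n) := by
    rw [IsLocallyConstant.iff_eventually_eq]
    intro t₀
    have hev : ∀ᶠ t in 𝓝 t₀, ∀ x ∈ (Set.univ : Set (OnePoint ℂ)),
        prT (H (x, t₀)) (H (x, t)) ≠ 0 := by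
      apply isCompact_univ.eventually_forall_of_forall_eventually
      intro x _
      have k1 : Continuous (fun p : I × OnePoint ℂ => H (p.2, t₀)) :=
        hH.comp (continuous_snd.prodMk continuous_const)
      have k2 : Continuous (fun p : I × OnePoint ℂ => H (p.2, p.1)) :=
        hH.comp (continuous_snd.prodMk continuous_fst)
      have hcont : Continuous (fun p : I × OnePoint ℂ => prT (H (p.2, t₀)) (H (p.2, p.1))) :=
        continuous_prT k1 k2
      have : prT (H (x, t₀)) (H (x, t₀)) ≠ 0 := by
        rw [prT_self]; exact one_ne_zero
      have h2 := (hcont.continuousAt (x := (t₀, x))).eventually_ne this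
      exact h2
    filter_upwards [hev] with t ht
    have c1 : Continuous (fun z => H (z, t)) := hH.comp (by fun_prop)
    have c0 : Continuous (fun z => H (z, t₀)) := hH.comp (by fun_prop)
    refine propext ⟨fun h => h.of_close c0 fun x => ?_, fun h => h.of_close c1 fun x => ?_⟩
    · rw [prT_comm]; exact ht x trivial
    · exact ht x trivial
  have := key.apply_eq_of_isPreconnected isPreconnected_univ (Set.mem_univ (0 : I))
    (Set.mem_univ (1 : I))
  exact this ▸ h

lemma lifts_ratio {a b a' b' : ℂ → ℂ} (ca : Continuous a) (cb : Continuous b)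
    (ca' : Continuous a') (cb' : Continuous b') (h : ∀ z, ¬(a z = 0 ∧ b z = 0))
    (h' : ∀ z, ¬(a' z = 0 ∧ b' z = 0)) (e : ∀ z, toP (a z) (b z) = toP (a' z) (b' z)) :
    ∃ κ : ℂ → ℂ, Continuous κ ∧ (∀ z, κ z ≠ 0) ∧ ∀ z, a z = κ z * a' z ∧ b z = κ z * b' z := by
  have hne : ∀ z, a' z * (starRingEnd ℂ) (a' z) + b' z * (starRingEnd ℂ) (b' z) ≠ 0 := by
    intro z
    rw [Complex.mul_conj', Complex.mul_conj']
    norm_cast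
    intro h0
    have h1 : ‖a' z‖ = 0 := by nlinarith [sq_nonneg ‖a' z‖, sq_nonneg ‖b' z‖]
    have h2 : ‖b' z‖ = 0 := by nlinarith [sq_nonneg ‖a' z‖, sq_nonneg ‖b' z‖]
    exact h' z ⟨norm_eq_zero.1 h1, norm_eq_zero.1 h2⟩
  have key : ∀ z, a z = (a z * (starRingEnd ℂ) (a' z) + b z * (starRingEnd ℂ) (b' z)) /
      (a' z * (starRingEnd ℂ) (a' z) + b' z * (starRingEnd ℂ) (b' z)) * a' z ∧
      b z = (a z * (starRingEnd ℂ) (a' z) + b z * (starRingEnd ℂ) (b' z)) /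
      (a' z * (starRingEnd ℂ) (a' z) + b' z * (starRingEnd ℂ) (b' z)) * b' z := by
    intro z
    have hz := toP_eq_iff (e z)
    have := hne z
    constructor
    · rw [div_mul_eq_mul_div, eq_div_iff this]
      linear_combination (starRingEnd ℂ) (b' z) * hz
    · rw [div_mul_eq_mul_div, eq_div_iff this]
      linear_combination -(starRingEnd ℂ) (a' z) * hz
  refine ⟨fun z => (a z * (starRingEnd ℂ) (a' z) + b z * (starRingEnd ℂ) (b' z)) /
      (a' z * (starRingEnd ℂ) (a' z) + b' z * (starRingEnd ℂ) (b' z)), ?_, ?_, key⟩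
  · have := Complex.continuous_conj
    exact Continuous.div (by fun_prop) (by fun_prop) hne
  · intro z h0
    apply h z
    obtain ⟨h1, h2⟩ := key z
    simp only at h0
    rw [h0] at h1 h2
    simpa using And.intro h1 h2

lemma HasLifts.unique {S : OnePoint ℂ → OnePoint ℂ} {n m : ℤ} (h : HasLifts S n)
    (h' : HasLifts S m) : n = m := by
  obtain ⟨a₀, b₀, a₁, b₁, ca0, cb0, ca1, cb1, h0, h1, e0, e1, hu⟩ := h
  obtain ⟨a₀', b₀', a₁', b₁', ca0', cb0', ca1', cb1', h0', h1', e0', e1', hu'⟩ := h'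
  obtain ⟨κ₀, c0, k0, hk0⟩ := lifts_ratio ca0 cb0 ca0' cb0' h0 h0' (fun z => by rw [e0, e0'])
  obtain ⟨κ₁, c1, k1, hk1⟩ := lifts_ratio ca1 cb1 ca1' cb1' h1 h1' (fun z => by rw [e1, e1'])
  have := zpow_eq_zero_of_extends (fun z => κ₁ z / κ₀ z) (c1.div c0 k0)
    (fun z => div_ne_zero (k1 z) (k0 z)) (m - n) (by
      intro u hu1
      have hu0 : u ≠ 0 := by rintro rfl; simp at hu1
      have hm : u ^ m ≠ 0 := zpow_ne_zero _ hu0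
      have hn : u ^ n ≠ 0 := zpow_ne_zero _ hu0
      have A := (hu u hu1).1
      have B := (hu u hu1).2
      have A' := (hu' u hu1).1
      have B' := (hu' u hu1).2
      rw [(hk0 u).1, (hk1 u).1, A', zpow_neg, zpow_neg] at A
      rw [(hk0 u).2, (hk1 u).2, B', zpow_neg, zpow_neg] at B
      rw [zpow_sub₀ hu0]
      have := k0 u
      have key : κ₁ u * u ^ n = κ₀ u * u ^ m := by
        by_cases ha : a₀' u = 0
        · have hb : b₀' u ≠ 0 := fun hb => h0' u ⟨ha, hb⟩
          field_simp at B
          linear_combination B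
        · field_simp at A
          linear_combination A
      field_simp
      linear_combination key)
  omega

lemma std_zero (x : OnePoint ℂ) : stdSphereMap 0 x = ((1 : ℂ) : OnePoint ℂ) := by
  induction x using OnePoint.rec <;> rfl

lemma std_infty {n : ℤ} (hn : n ≠ 0) : stdSphereMap n ∞ = ∞ := by
  change (if n = 0 then ((1 : ℂ) : OnePoint ℂ) else (∞ : OnePoint ℂ)) = ∞
  rw [if_neg hn]

lemma std_pos {n : ℤ} (hn : 0 < n) (w : ℂ) :
    stdSphereMap n w = ((w ^ n.toNat : ℂ) : OnePoint ℂ) := by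
  change (if n = 0 then ((1 : ℂ) : OnePoint ℂ)
      else if 0 < n then ((w ^ n.toNat : ℂ) : OnePoint ℂ)
      else (((starRingEnd ℂ) w ^ (-n).toNat : ℂ) : OnePoint ℂ)) = _
  rw [if_neg hn.ne', if_pos hn]

lemma std_neg {n : ℤ} (hn : n < 0) (w : ℂ) :
    stdSphereMap n w = (((starRingEnd ℂ) w ^ (-n).toNat : ℂ) : OnePoint ℂ) := by
  change (if n = 0 then ((1 : ℂ) : OnePoint ℂ)
      else if 0 < n then ((w ^ n.toNat : ℂ) : OnePoint ℂ)
      else (((starRingEnd ℂ) w ^ (-n).toNat : ℂ) : OnePoint ℂ)) = _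
  rw [if_neg hn.ne, if_neg (by omega)]

lemma hasLifts_std (n : ℤ) : HasLifts (stdSphereMap n) n := by
  have cc := Complex.continuous_conj
  rcases lt_trichotomy n 0 with hn | rfl | hn
  · obtain ⟨k, rfl⟩ : ∃ k : ℕ, n = -(k : ℤ) := ⟨n.natAbs, by omega⟩
    have hk : k ≠ 0 := by rintro rfl; simp at hn
    refine ⟨fun z => (starRingEnd ℂ) z ^ k, fun _ => 1, fun _ => 1, fun z => z ^ k,
      by fun_prop, by fun_prop, by fun_prop, by fun_prop, by simp, by simp, ?_, ?_, ?_⟩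
    · intro z
      rw [toP_one]
      rw [std_neg hn]
      simp
    · intro z
      by_cases hz : z = 0
      · subst hz
        simp [toP, hk, std_infty]
      · have h1 : (starRingEnd ℂ) z ≠ 0 := by simpa using hz
        rw [toP_of_ne h1, toP_of_ne (pow_ne_zero k hz)]
        rw [std_neg hn]
        simp
    · intro u hu1
      have hu0 : u ≠ 0 := by rintro rfl; simp at hu1
      have : u * (starRingEnd ℂ) u = 1 := by rw [Complex.mul_conj', hu1]; simp
      simp [← mul_pow, this]
  · refine ⟨fun _ => 1, fun _ => 1, fun _ => 1, fun _ => 1,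
      by fun_prop, by fun_prop, by fun_prop, by fun_prop, by simp, by simp, ?_, ?_, by simp⟩
    · intro z; simp [toP, std_zero]
    · intro z; rw [std_zero]; simp [toP]
  · obtain ⟨k, rfl⟩ : ∃ k : ℕ, n = (k : ℤ) := ⟨n.natAbs, by omega⟩
    have hk : k ≠ 0 := by rintro rfl; simp at hn
    refine ⟨fun z => z ^ k, fun _ => 1, fun _ => 1, fun z => (starRingEnd ℂ) z ^ k,
      by fun_prop, by fun_prop, by fun_prop, by fun_prop, by simp, by simp, ?_, ?_, ?_⟩
    · intro z
      rw [toP_one]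
      rw [std_pos hn]
      simp
    · intro z
      by_cases hz : z = 0
      · subst hz
        simp [toP, hk, std_infty]
      · have h1 : (starRingEnd ℂ) z ≠ 0 := by simpa using hz
        rw [toP_of_ne h1, toP_of_ne (pow_ne_zero k h1)]
        rw [std_pos hn]
        simp
    · intro u hu1
      have hu0 : u ≠ 0 := by rintro rfl; simp at hu1
      have : u * (starRingEnd ℂ) u = 1 := by rw [Complex.mul_conj', hu1]; simp
      have h2 : (starRingEnd ℂ) u = u⁻¹ := eq_inv_of_mul_eq_one_right this
      simp [h2, hu0]

/-- The degree is unique. -/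
lemma HasDegree.unique {R : OnePoint ℂ → OnePoint ℂ} {n m : ℤ} (h : HasDegree R n)
    (h' : HasDegree R m) : n = m := by
  obtain ⟨H, hH, h0, h1⟩ := h
  obtain ⟨H', hH', h0', h1'⟩ := h'
  have A : HasLifts (fun z => H (z, 1)) n := by
    simpa only [h1] using hasLifts_std n
  have B : HasLifts R n := by
    have := HasLifts.of_homotopy (fun p => H (p.1, unitInterval.symm p.2))
      (hH.comp (by fun_prop)) n (by simpa using A)
    simpa [h0] using this
  have C : HasLifts (stdSphereMap m) n := by
    have := HasLifts.of_homotopy H' hH' n (by simpa [h0'] using B)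
    simpa [h1'] using this
  exact C.unique (hasLifts_std m)

lemma contDiff_evalZZbar (f : MvPolynomial (Fin 2) ℂ) : ContDiff ℝ 1 (evalZZbar f) := by
  unfold evalZZbar
  induction f using MvPolynomial.induction_on with
  | C a => simpa using contDiff_const
  | add p q hp hq => simpa using hp.add hq
  | mul_X p i hp =>
    simp only [map_mul, MvPolynomial.eval_X]
    apply hp.mul
    fin_cases i
    · exact contDiff_fun_id
    · exact Complex.conjCLE.contDiff (n := 1)

lemma evalZZbar_eq_sum (p : MvPolynomial (Fin 2) ℂ) (z : ℂ) :
    evalZZbar p z = ∑ m ∈ p.support, p.coeff m * (z ^ (m 0) * (starRingEnd ℂ) z ^ (m 1)) := by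
  simp [evalZZbar, MvPolynomial.eval_eq']

lemma evalZZbar_bound (p : MvPolynomial (Fin 2) ℂ) (k : ℕ)
    (hp : ∀ m ∈ p.support, m 0 + m 1 ≤ k) :
    ∃ C : ℝ, 0 ≤ C ∧ ∀ z : ℂ, 1 ≤ ‖z‖ → ‖evalZZbar p z‖ ≤ C * ‖z‖ ^ k := by
  refine ⟨∑ m ∈ p.support, ‖p.coeff m‖, Finset.sum_nonneg fun _ _ => norm_nonneg _, ?_⟩
  intro z hz
  rw [evalZZbar_eq_sum, Finset.sum_mul]
  refine (norm_sum_le _ _).trans (Finset.sum_le_sum fun m hm => ?_)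
  rw [norm_mul, norm_mul, norm_pow, norm_pow, Complex.norm_conj, ← pow_add]
  exact mul_le_mul_of_nonneg_left (pow_le_pow_right₀ hz (hp m hm)) (norm_nonneg _)

lemma degree_fin_two (m : Fin 2 →₀ ℕ) : m.degree = m 0 + m 1 := by
  rw [Finsupp.degree_eq_sum]; simp

lemma evalZZbar_homog {T : MvPolynomial (Fin 2) ℂ} {d : ℕ} (hT : T.IsHomogeneous d) (r : ℝ)
    (z : ℂ) : evalZZbar T (r * z) = (r : ℂ) ^ d * evalZZbar T z := by
  rw [evalZZbar_eq_sum, evalZZbar_eq_sum, Finset.mul_sum]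
  refine Finset.sum_congr rfl fun m hm => ?_
  have h1 : m.degree = d := by
    by_contra h
    exact (MvPolynomial.mem_support_iff.1 hm) (hT.coeff_eq_zero h)
  rw [degree_fin_two] at h1
  rw [map_mul, Complex.conj_ofReal, mul_pow, mul_pow, ← h1, pow_add]
  ring

lemma tendsto_real_mul_cocompact {u : ℂ} (hu : u ≠ 0) :
    Tendsto (fun r : ℝ => (r : ℂ) * u) atTop (cocompact ℂ) := by
  rw [← Metric.cobounded_eq_cocompact, ← tendsto_norm_atTop_iff_cobounded]
  simp only [norm_mul, Complex.norm_real, Real.norm_eq_abs]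
  exact tendsto_abs_atTop_atTop.atTop_mul_const (norm_pos_iff.2 hu)

section
variable {T : MvPolynomial (Fin 2) ℂ} {d : ℕ}

lemma T_ne_zero (hT : T.IsHomogeneous d)
    (hTinf : Tendsto (fun z : ℂ => ‖evalZZbar T z‖) (cocompact ℂ) atTop) {u : ℂ} (hu : u ≠ 0) :
    evalZZbar T u ≠ 0 := by
  intro h0
  have := hTinf.comp (tendsto_real_mul_cocompact hu)
  have h1 : (fun z : ℂ => ‖evalZZbar T z‖) ∘ (fun r : ℝ => (r : ℂ) * u) = fun _ => 0 := by
    funext r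
    simp [evalZZbar_homog hT, h0]
  rw [h1] at this
  exact not_tendsto_const_atTop _ _ this

lemma d_pos (hT : T.IsHomogeneous d)
    (hTinf : Tendsto (fun z : ℂ => ‖evalZZbar T z‖) (cocompact ℂ) atTop) : 1 ≤ d := by
  by_contra hd
  have hd : d = 0 := by omega
  subst hd
  have := hTinf.comp (tendsto_real_mul_cocompact one_ne_zero)
  have h1 : (fun z : ℂ => ‖evalZZbar T z‖) ∘ (fun r : ℝ => (r : ℂ) * 1) =
      fun _ => ‖evalZZbar T 1‖ := by
    funext r
    simp only [Function.comp, evalZZbar_homog hT]; simp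
  rw [h1] at this
  exact not_tendsto_const_atTop _ _ this

lemma T_lower (hT : T.IsHomogeneous d)
    (hTinf : Tendsto (fun z : ℂ => ‖evalZZbar T z‖) (cocompact ℂ) atTop) :
    ∃ m : ℝ, 0 < m ∧ ∀ z, m * ‖z‖ ^ d ≤ ‖evalZZbar T z‖ := by
  have hc : Continuous (fun z => ‖evalZZbar T z‖) := (contDiff_evalZZbar T).continuous.norm
  obtain ⟨u, hu, hmin⟩ := (isCompact_sphere (0 : ℂ) 1).exists_isMinOn ⟨1, by simp⟩ hc.continuousOn
  have hu0 : u ≠ 0 := by rintro rfl; simp at hu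
  refine ⟨_, norm_pos_iff.2 (T_ne_zero hT hTinf hu0), fun z => ?_⟩
  by_cases hz : z = 0
  · subst hz
    have := d_pos hT hTinf
    rw [norm_zero, zero_pow (by omega), mul_zero]
    exact norm_nonneg _
  · have hz' : (‖z‖ : ℂ) ≠ 0 := by simpa using hz
    have h1 : z = (‖z‖ : ℝ) * (z / ‖z‖) := by field_simp
    have h2 : z / ‖z‖ ∈ Metric.sphere (0 : ℂ) 1 := by simp [hz]
    conv_rhs => rw [h1]
    rw [evalZZbar_homog hT, norm_mul, norm_pow, Complex.norm_real, norm_norm, mul_comm]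
    exact mul_le_mul_of_nonneg_left (hmin h2) (by positivity)

lemma tendsto_inv_T (hTinf : Tendsto (fun z : ℂ => ‖evalZZbar T z‖) (cocompact ℂ) atTop) :
    Tendsto (fun z => (evalZZbar T z)⁻¹) (cocompact ℂ) (𝓝 0) := by
  rw [tendsto_zero_iff_norm_tendsto_zero]
  simp only [norm_inv]
  exact tendsto_inv_atTop_zero.comp hTinf

lemma bound_g (hT : T.IsHomogeneous d)
    (hTinf : Tendsto (fun z : ℂ => ‖evalZZbar T z‖) (cocompact ℂ) atTop)
    (g : MvPolynomial (Fin 2) ℂ) (hg : g.totalDegree ≤ d) :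
    ∃ C : ℝ, 0 ≤ C ∧ ∀ᶠ z in cocompact ℂ, ‖evalZZbar g z‖ ≤ C * ‖evalZZbar T z‖ := by
  obtain ⟨m, hm, hT2⟩ := T_lower hT hTinf
  obtain ⟨C, hC, h⟩ := evalZZbar_bound g d (by
    intro k hk
    rw [← degree_fin_two]
    exact (MvPolynomial.le_totalDegree hk).trans hg)
  refine ⟨C / m, by positivity, ?_⟩
  filter_upwards [(tendsto_norm_cocompact_atTop (E := ℂ)).eventually_ge_atTop 1] with z hz
  refine (h z hz).trans ?_
  rw [div_mul_eq_mul_div, le_div_iff₀ hm, mul_assoc, mul_comm _ m]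
  exact mul_le_mul_of_nonneg_left (hT2 z) hC

lemma tendsto_f_T (f : MvPolynomial (Fin 2) ℂ) (hd : d = f.totalDegree)
    (hTf : T = MvPolynomial.homogeneousComponent d f)
    (hTinf : Tendsto (fun z : ℂ => ‖evalZZbar T z‖) (cocompact ℂ) atTop) :
    Tendsto (fun z => evalZZbar f z / evalZZbar T z) (cocompact ℂ) (𝓝 1) := by
  have hT : T.IsHomogeneous d := hTf ▸ MvPolynomial.homogeneousComponent_isHomogeneous d f
  have hd1 := d_pos hT hTinf
  obtain ⟨m, hm, hT2⟩ := T_lower hT hTinf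
  obtain ⟨C, hC, h⟩ := evalZZbar_bound (f - T) (d - 1) (by
    intro k hk
    have h1 : k.degree ≤ d := by
      have h2 := MvPolynomial.support_sub (Fin 2) f T hk
      rcases Finset.mem_union.1 h2 with h2 | h2
      · rw [hd]; exact MvPolynomial.le_totalDegree h2
      · by_contra h
        exact (MvPolynomial.mem_support_iff.1 h2) (hT.coeff_eq_zero (by omega))
    have h2 : k.degree ≠ d := by
      intro h3
      apply MvPolynomial.mem_support_iff.1 hk
      rw [MvPolynomial.coeff_sub, hTf, MvPolynomial.coeff_homogeneousComponent, if_pos h3, sub_self]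
    rw [degree_fin_two] at h1 h2
    omega)
  have h0 : Tendsto (fun z => evalZZbar (f - T) z / evalZZbar T z) (cocompact ℂ) (𝓝 0) := by
    have hz0 : Tendsto (fun w : ℂ => C / m * (1 / ‖w‖)) (cocompact ℂ) (𝓝 0) := by
      simpa using tendsto_inv_norm.const_mul (C / m)
    refine squeeze_zero_norm' ?_ hz0
    filter_upwards [(tendsto_norm_cocompact_atTop (E := ℂ)).eventually_ge_atTop 1] with z hz
    have hzp : 0 < ‖z‖ := by linarith
    have hTp : 0 < m * ‖z‖ ^ d := by positivity
    rw [norm_div]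
    calc ‖evalZZbar (f - T) z‖ / ‖evalZZbar T z‖ ≤ (C * ‖z‖ ^ (d - 1)) / (m * ‖z‖ ^ d) := by
          gcongr
          · exact h z hz
          · exact hT2 z
      _ = C / m * (1 / ‖z‖) := by
          obtain ⟨e, rfl⟩ : ∃ e, d = e + 1 := ⟨d - 1, by omega⟩
          simp only [Nat.add_sub_cancel, pow_succ]
          field_simp
  have h1 := h0.add_const 1
  rw [zero_add] at h1
  refine h1.congr' ?_
  filter_upwards [(tendsto_norm_cocompact_atTop (E := ℂ)).eventually_ge_atTop 1] with z hz
  have hz0 : z ≠ 0 := by rintro rfl; simp at hz; linarith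
  have := T_ne_zero hT hTinf hz0
  have e : evalZZbar (f - T) z = evalZZbar f z - evalZZbar T z := by simp [evalZZbar]
  rw [e]
  field_simp
  ring

end

/-- General position: a straight line homotopy perturbed so that it avoids the origin. -/
lemma exists_perturbation {f g h k : ℂ → ℂ} (hf : ContDiff ℝ 1 f) (hg : ContDiff ℝ 1 g)
    (hh : ContDiff ℝ 1 h) (hk : ContDiff ℝ 1 k) (hfg : ∀ z, ¬(f z = 0 ∧ g z = 0))
    (hhk : ∀ z, ¬(h z = 0 ∧ k z = 0)) :
    ∃ a b : ℂ, ∀ z : ℂ, ∀ t : I,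
      ¬((1 - (t : ℝ) : ℂ) * f z + (t : ℝ) * h z + (t : ℝ) * (1 - (t : ℝ)) * a = 0 ∧
        (1 - (t : ℝ) : ℂ) * g z + (t : ℝ) * k z + (t : ℝ) * (1 - (t : ℝ)) * b = 0) := by
  have e1 : ContDiff ℝ 1 (fun p : ℂ × ℝ => ((1 + Real.exp p.2 : ℝ) : ℂ)) :=
    Complex.ofRealCLM.contDiff.comp (contDiff_const.add (Real.contDiff_exp.comp contDiff_snd))
  have e2 : ContDiff ℝ 1 (fun p : ℂ × ℝ => ((1 + Real.exp (-p.2) : ℝ) : ℂ)) :=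
    Complex.ofRealCLM.contDiff.comp
      (contDiff_const.add (Real.contDiff_exp.comp contDiff_snd.neg))
  have f1 := hf.comp (contDiff_fst (E := ℂ) (F := ℝ))
  have g1 := hg.comp (contDiff_fst (E := ℂ) (F := ℝ))
  have h1 := hh.comp (contDiff_fst (E := ℂ) (F := ℝ))
  have k1 := hk.comp (contDiff_fst (E := ℂ) (F := ℝ))
  have hφ : ContDiff ℝ 1 (fun p : ℂ × ℝ =>
      (-(((1 + Real.exp p.2 : ℝ) : ℂ) * f p.1 + ((1 + Real.exp (-p.2) : ℝ) : ℂ) * h p.1),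
       -(((1 + Real.exp p.2 : ℝ) : ℂ) * g p.1 + ((1 + Real.exp (-p.2) : ℝ) : ℂ) * k p.1))) :=
    (((e1.mul f1).add (e2.mul h1)).neg).prodMk (((e1.mul g1).add (e2.mul k1)).neg)
  have hfin : Module.finrank ℝ (ℂ × ℝ) < Module.finrank ℝ (ℂ × ℂ) := by
    simp [Module.finrank_prod, Complex.finrank_real_complex]
  obtain ⟨⟨a, b⟩, hab⟩ := (hφ.dense_compl_range_of_finrank_lt_finrank hfin).nonempty
  refine ⟨a, b, fun z t => ?_⟩
  rintro ⟨E1, E2⟩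
  rcases eq_or_lt_of_le t.2.1 with ht0 | ht0
  · rw [← ht0] at E1 E2
    exact hfg z (by simpa using And.intro E1 E2)
  rcases eq_or_lt_of_le t.2.2 with ht1 | ht1
  · rw [ht1] at E1 E2
    exact hhk z (by simpa using And.intro E1 E2)
  apply hab
  generalize (t : ℝ) = s at *
  have hs : (s : ℂ) ≠ 0 := by exact_mod_cast ht0.ne'
  have hs1 : (1 - s : ℂ) ≠ 0 := by
    have : (1 - s : ℝ) ≠ 0 := by linarith
    exact_mod_cast this
  have hpos : 0 < (1 - s) / s := div_pos (by linarith) ht0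
  refine ⟨(z, Real.log ((1 - s) / s)), ?_⟩
  simp only [Real.exp_neg, Real.exp_log hpos]
  push_cast
  ext
  · simp only
    field_simp
    linear_combination -E1
  · simp only
    field_simp
    linear_combination -E2

/-- inversion -/
noncomputable def invP (x : OnePoint ℂ) : ℂ := x.elim 0 (fun w => w⁻¹)

lemma invP_toP {a b : ℂ} : invP (toP a b) = b / a := by
  by_cases hb : b = 0
  · simp [hb, toP_zero, invP]
  · simp [toP_of_ne hb, invP]

lemma toP_invP {x : OnePoint ℂ} (hx : x ≠ ((0 : ℂ) : OnePoint ℂ)) : toP 1 (invP x) = x := by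
  induction x using OnePoint.rec with
  | infty => simp [invP, toP_zero]
  | coe w =>
    have hw : w ≠ 0 := by rintro rfl; exact hx rfl
    simp [invP, toP, hw]

lemma continuousAt_invP {x : OnePoint ℂ} (hx : x ≠ ((0 : ℂ) : OnePoint ℂ)) :
    ContinuousAt invP x := by
  induction x using OnePoint.rec with
  | infty =>
    rw [OnePoint.continuousAt_infty', Filter.coclosedCompact_eq_cocompact]
    change Tendsto (fun w : ℂ => w⁻¹) _ (𝓝 0)
    rw [tendsto_zero_iff_norm_tendsto_zero]
    simpa using tendsto_inv_norm
  | coe w =>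
    have hw : w ≠ 0 := by rintro rfl; exact hx rfl
    rw [OnePoint.continuousAt_coe]
    exact continuousAt_inv₀ hw

/-- The extension of `T` to the sphere. -/
noncomputable def extP (T : ℂ → ℂ) (x : OnePoint ℂ) : OnePoint ℂ :=
  x.elim ∞ (fun z => ((T z : ℂ) : OnePoint ℂ))

lemma stepA {f g T : ℂ → ℂ} (hf : ContDiff ℝ 1 f) (hg : ContDiff ℝ 1 g) (hT : ContDiff ℝ 1 T)
    (hfg : ∀ z, ¬(f z = 0 ∧ g z = 0))
    (hTinf : Tendsto (fun z => ‖T z‖) (cocompact ℂ) atTop)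
    (hfT : Tendsto (fun z => f z / T z) (cocompact ℂ) (𝓝 1))
    (hgT : ∃ C : ℝ, 0 ≤ C ∧ ∀ᶠ z in cocompact ℂ, ‖g z‖ ≤ C * ‖T z‖)
    (R : OnePoint ℂ → OnePoint ℂ) (hRc : Continuous R) (hR : ∀ z : ℂ, R z = toP (f z) (g z)) :
    ∃ H : OnePoint ℂ × I → OnePoint ℂ, Continuous H ∧ (∀ x, H (x, 0) = R x) ∧
      ∀ x, H (x, 1) = extP T x := by
  have hT0 : ∀ᶠ z in cocompact ℂ, T z ≠ 0 := by
    filter_upwards [hTinf.eventually_gt_atTop 0] with z hz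
    exact norm_pos_iff.1 hz
  have hTinv : Tendsto (fun z => 1 / T z) (cocompact ℂ) (𝓝 0) := by
    rw [tendsto_zero_iff_norm_tendsto_zero]
    simp only [one_div, norm_inv]
    exact tendsto_inv_atTop_zero.comp hTinf
  have hf2 : ∀ᶠ z in cocompact ℂ, ‖T z‖ ≤ 2 * ‖f z‖ := by
    have := hfT.norm.eventually (lt_mem_nhds (show (1/2 : ℝ) < ‖(1 : ℂ)‖ by norm_num))
    filter_upwards [this, hT0] with z hz hz0
    rw [norm_div, lt_div_iff₀ (norm_pos_iff.2 hz0)] at hz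
    linarith
  have hRt : Tendsto (fun z : ℂ => R z) (cocompact ℂ) (𝓝 (R ∞)) := by
    have := hRc.continuousAt (x := ∞)
    rw [OnePoint.continuousAt_infty', Filter.coclosedCompact_eq_cocompact] at this
    exact this
  have hR0 : R ∞ ≠ ((0 : ℂ) : OnePoint ℂ) := by
    intro h0
    obtain ⟨C, hC, hgT⟩ := hgT
    rw [h0, OnePoint.nhds_coe_eq] at hRt
    have hε : (0 : ℝ) < 1 / (2 * C + 1) := by positivity
    have h1 : ∀ᶠ z : ℂ in cocompact ℂ,
        R z ∈ ((↑) : ℂ → OnePoint ℂ) '' Metric.ball (0 : ℂ) (1 / (2 * C + 1)) :=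
      hRt (Filter.image_mem_map (Metric.ball_mem_nhds (0 : ℂ) hε))
    obtain ⟨z, hz1, hz2, hz3, hz4⟩ := (h1.and (hf2.and (hgT.and hT0))).exists
    obtain ⟨w, hw, hwz⟩ := hz1
    simp only [hR] at hwz
    by_cases hgz : g z = 0
    · rw [hgz, toP_zero] at hwz
      exact OnePoint.coe_ne_infty _ hwz
    · rw [toP_of_ne hgz, OnePoint.coe_eq_coe] at hwz
      have hgp := norm_pos_iff.2 hgz
      have hTp := norm_pos_iff.2 hz4
      rw [hwz, mem_ball_zero_iff, norm_div, div_lt_div_iff₀ hgp (by positivity)] at hw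
      nlinarith
  have hgf : Tendsto (fun z => g z / f z) (cocompact ℂ) (𝓝 (invP (R ∞))) := by
    have := (continuousAt_invP hR0).tendsto.comp hRt
    refine this.congr fun z => ?_
    simp only [Function.comp, hR, invP_toP]
  set c := invP (R ∞) with hc
  have hgT' : Tendsto (fun z => g z / T z) (cocompact ℂ) (𝓝 c) := by
    have := hgf.mul hfT
    rw [mul_one] at this
    refine this.congr' ?_
    filter_upwards [hf2, hT0] with z h1 h2
    have : f z ≠ 0 := by
      rintro h; rw [h] at h1; simp at h1; exact h2 h1
    field_simp
  obtain ⟨a, b, hab⟩ := exists_perturbation hf hg hT (contDiff_const (c := (1 : ℂ))) hfg (by simp)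
  let F : ℂ × I → ℂ := fun p => (1 - (p.2 : ℝ) : ℂ) * f p.1 + (p.2 : ℝ) * T p.1 +
    (p.2 : ℝ) * (1 - (p.2 : ℝ)) * a
  let G : ℂ × I → ℂ := fun p => (1 - (p.2 : ℝ) : ℂ) * g p.1 + (p.2 : ℝ) * 1 +
    (p.2 : ℝ) * (1 - (p.2 : ℝ)) * b
  have cf := hf.continuous
  have cg := hg.continuous
  have cT := hT.continuous
  have ht : ∀ t : I, Tendsto (fun p : ℂ × I => ((p.2 : ℝ) : ℂ)) (cocompact ℂ ×ˢ 𝓝 t)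
      (𝓝 ((t : ℝ) : ℂ)) := by
    intro t
    have : Continuous (fun t : I => ((t : ℝ) : ℂ)) := by fun_prop
    exact (this.tendsto t).comp tendsto_snd
  have hFT : ∀ t : I, Tendsto (fun p => F p / T p.1) (cocompact ℂ ×ˢ 𝓝 t) (𝓝 1) := by
    intro t
    have h1 := ((((ht t).const_sub 1).mul (hfT.comp tendsto_fst)).add (ht t)).add
      ((((ht t).mul ((ht t).const_sub 1)).mul_const a).mul (hTinv.comp tendsto_fst))
    have e : (1 - ((t : ℝ) : ℂ)) * 1 + (t : ℝ) + (t : ℝ) * (1 - ((t : ℝ) : ℂ)) * a * 0 = 1 := by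
      ring
    rw [e] at h1
    refine h1.congr' ?_
    filter_upwards [tendsto_fst.eventually hT0] with p hp
    simp only [F, Function.comp]
    field_simp
  have hGT : ∀ t : I, Tendsto (fun p => G p / T p.1) (cocompact ℂ ×ˢ 𝓝 t)
      (𝓝 ((1 - ((t : ℝ) : ℂ)) * c)) := by
    intro t
    have h1 := ((((ht t).const_sub 1).mul (hgT'.comp tendsto_fst))).add
      (((ht t).add (((ht t).mul ((ht t).const_sub 1)).mul_const b)).mul (hTinv.comp tendsto_fst))
    rw [mul_zero, add_zero] at h1
    refine h1.congr' ?_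
    filter_upwards [tendsto_fst.eventually hT0] with p hp
    simp only [G, Function.comp]
    field_simp
    ring
  have hF0 : ∀ t : I, ∀ᶠ p in cocompact ℂ ×ˢ 𝓝 t, F p ≠ 0 := by
    intro t
    filter_upwards [(hFT t).eventually_ne one_ne_zero] with p hp h0
    apply hp
    rw [h0, zero_div]
  refine ⟨sph F G (fun t => (1 - ((t : ℝ) : ℂ)) * c), continuous_sph (by fun_prop) (by fun_prop)
    (by fun_prop) (fun p => hab p.1 p.2) hF0 ?_, ?_, ?_⟩
  · intro t
    have h1 := (hGT t).div (hFT t) one_ne_zero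
    rw [div_one] at h1
    refine h1.congr' ?_
    filter_upwards [tendsto_fst.eventually hT0] with p hp
    simp only [Pi.div_apply]
    rw [div_div_div_cancel_right₀ hp]
  · intro x
    induction x using OnePoint.rec with
    | infty => simp [sph, hc, toP_invP hR0]
    | coe z => simp [sph, F, G, hR]
  · intro x
    induction x using OnePoint.rec with
    | infty => simp [sph, extP, toP_zero]
    | coe z => simp [sph, F, G, extP, toP_one]

lemma exists_Lam (γ : ℂ → ℂ) (hγ : Continuous γ) (hne : ∀ u, ‖u‖ = 1 → γ u ≠ 0) (n : ℤ)
    (hw : IsWindingNumber (fun α : ℝ => γ (Complex.exp ((α : ℂ) * Complex.I))) n) :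
    ∃ Λ : Circle → ℂ, Continuous Λ ∧ ∀ u : Circle, γ u = Complex.exp (Λ u) * (u : ℂ) ^ n := by
  obtain ⟨θ, hθc, hθ, hθn⟩ := hw
  beta_reduce at hθ
  have hpi : 0 < 2 * Real.pi := Real.two_pi_pos
  have : Fact (0 < 2 * Real.pi) := ⟨hpi⟩
  let L : ℝ → ℂ := fun α => (Real.log ‖γ (Complex.exp ((α : ℂ) * Complex.I))‖ : ℝ) +
    ((θ α - n * α : ℝ) : ℂ) * Complex.I
  have hne' : ∀ α : ℝ, γ (Complex.exp ((α : ℂ) * Complex.I)) ≠ 0 := fun α =>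
    hne _ (Complex.norm_exp_ofReal_mul_I α)
  have hLc : ContinuousOn L (Set.Icc 0 (2 * Real.pi)) := by
    have h1 : Continuous fun α : ℝ => Real.log ‖γ (Complex.exp ((α : ℂ) * Complex.I))‖ :=
      Continuous.log (by fun_prop) (fun α => norm_ne_zero_iff.2 (hne' α))
    have h2 : ContinuousOn (fun α : ℝ => θ α - n * α) (Set.Icc 0 (2 * Real.pi)) :=
      hθc.sub (by fun_prop)
    exact (Complex.continuous_ofReal.comp h1).continuousOn.add
      ((Complex.continuous_ofReal.comp_continuousOn h2).mul continuousOn_const)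
  have hL0 : L 0 = L (0 + 2 * Real.pi) := by
    simp only [L]
    have : θ 0 - n * 0 = θ (0 + 2 * Real.pi) - n * (0 + 2 * Real.pi) := by
      rw [zero_add]; linarith
    rw [← this]
    congr 5
    simp
  have hLe : ∀ α ∈ Set.Icc 0 (2 * Real.pi), γ (Complex.exp ((α : ℂ) * Complex.I)) =
      Complex.exp (L α) * Complex.exp ((α : ℂ) * Complex.I) ^ n := by
    intro α hα
    simp only [L]
    rw [Complex.exp_add, ← Complex.ofReal_exp, Real.exp_log (norm_pos_iff.2 (hne' α)),
      ← Complex.exp_int_mul, mul_assoc, ← Complex.exp_add]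
    conv_lhs => rw [hθ α hα]
    congr 2
    push_cast
    ring
  let Φ : AddCircle (2 * Real.pi) → ℂ := AddCircle.liftIco (2 * Real.pi) 0 L
  have hΦ : Continuous Φ := AddCircle.liftIco_zero_continuous (by simpa using hL0) hLc
  refine ⟨fun u => Φ (AddCircle.homeomorphCircle'.symm u),
    hΦ.comp AddCircle.homeomorphCircle'.symm.continuous, ?_⟩
  intro u
  obtain ⟨x, rfl⟩ := AddCircle.homeomorphCircle'.surjective u
  beta_reduce
  rw [Homeomorph.symm_apply_apply]
  obtain ⟨α, hα, rfl⟩ : ∃ α ∈ Set.Ico (0 : ℝ) (0 + 2 * Real.pi), (α : AddCircle (2 * Real.pi)) = x := by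
    have := AddCircle.coe_image_Ico_eq (2 * Real.pi) 0
    have hx : x ∈ ((↑) : ℝ → AddCircle (2 * Real.pi)) '' Set.Ico (0 : ℝ) (0 + 2 * Real.pi) := by
      rw [this]; trivial
    exact hx
  rw [AddCircle.homeomorphCircle'_apply_mk]
  simp only [Φ]
  rw [zero_add] at hα
  rw [AddCircle.liftIco_zero_coe_apply hα, Circle.coe_exp]
  exact hLe α ⟨hα.1, hα.2.le⟩

lemma exists_Lam' (T : ℂ → ℂ) (hTc : Continuous T) (d : ℕ)
    (hhom : ∀ (r : ℝ) (z : ℂ), T (r * z) = (r : ℂ) ^ d * T z)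
    (hne : ∀ u, u ≠ 0 → T u ≠ 0) (n : ℤ)
    (hw : IsWindingNumber (fun α : ℝ => T (Complex.exp ((α : ℂ) * Complex.I))) n) :
    ∃ (Λ : ℂ → ℂ) (M : ℝ), (∀ z, z ≠ 0 → ContinuousAt Λ z) ∧ (∀ z, ‖Λ z‖ ≤ M) ∧
      ∀ z, z ≠ 0 → T z = ((‖z‖ : ℝ) : ℂ) ^ d * Complex.exp (Λ z) * (z / (‖z‖ : ℝ)) ^ n := by
  obtain ⟨Λ, hΛ, hΛe⟩ := exists_Lam T hTc (fun u hu => hne u (norm_pos_iff.1 (by rw [hu]; norm_num)))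
    n hw
  obtain ⟨M, hM⟩ := (isCompact_range hΛ).isBounded.exists_norm_le
  have hmem : ∀ z : ℂ, z ≠ 0 → z / (‖z‖ : ℝ) ∈ Submonoid.unitSphere ℂ := by
    intro z hz
    have : ‖z‖ ≠ 0 := norm_ne_zero_iff.2 hz
    simp [Submonoid.unitSphere, this]
  let u : ℂ → Circle := fun z => if h : z ≠ 0 then ⟨z / (‖z‖ : ℝ), hmem z h⟩ else 1
  have hu : ∀ z, z ≠ 0 → (u z : ℂ) = z / (‖z‖ : ℝ) := by
    intro z hz
    simp [u, hz]
  refine ⟨fun z => Λ (u z), M, ?_, fun z => hM _ ⟨_, rfl⟩, ?_⟩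
  · intro z hz
    refine hΛ.continuousAt.comp ?_
    rw [(Topology.IsInducing.mk rfl : Topology.IsInducing (fun v : Circle => (v : ℂ))).continuousAt_iff]
    have h1 : ContinuousAt (fun z : ℂ => z / ((‖z‖ : ℝ) : ℂ)) z :=
      continuousAt_id.div (by fun_prop) (by simpa using hz)
    refine h1.congr ?_
    filter_upwards [isOpen_ne.mem_nhds hz] with y hy
    exact (hu y hy).symm
  · intro z hz
    rw [mul_assoc, ← hu z hz, ← hΛe, ← hhom, hu z hz]
    congr 1
    have : ((‖z‖ : ℝ) : ℂ) ≠ 0 := by simpa using hz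
    field_simp

/-- the straightening homotopy -/
noncomputable def wmap (Λ : ℂ → ℂ) (d k : ℕ) (n : ℤ) (p : ℂ × I) : ℂ :=
  (((1 - (p.2 : ℝ)) * ‖p.1‖ ^ d + (p.2 : ℝ) * ‖p.1‖ ^ k : ℝ) : ℂ) *
    Complex.exp ((1 - (p.2 : ℝ) : ℝ) * Λ p.1) * (p.1 / (‖p.1‖ : ℝ)) ^ n

lemma wmap_coef_nonneg (d k : ℕ) (p : ℂ × I) :
    0 ≤ (1 - (p.2 : ℝ)) * ‖p.1‖ ^ d + (p.2 : ℝ) * ‖p.1‖ ^ k := by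
  have h0 := p.2.2.1
  have h1 : 0 ≤ 1 - (p.2 : ℝ) := by linarith [p.2.2.2]
  positivity

lemma norm_wmap (Λ : ℂ → ℂ) (d k : ℕ) (n : ℤ) (p : ℂ × I) (hp : p.1 ≠ 0) :
    ‖wmap Λ d k n p‖ = ((1 - (p.2 : ℝ)) * ‖p.1‖ ^ d + (p.2 : ℝ) * ‖p.1‖ ^ k) *
      Real.exp ((1 - (p.2 : ℝ)) * (Λ p.1).re) := by
  have h : ‖p.1‖ ≠ 0 := norm_ne_zero_iff.2 hp
  rw [wmap, norm_mul, norm_mul, norm_zpow, norm_div, Complex.norm_real, Complex.norm_real,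
    norm_norm, div_self h, one_zpow, mul_one, Complex.norm_exp, Complex.re_ofReal_mul,
    Real.norm_of_nonneg (wmap_coef_nonneg d k p)]

lemma wmap_exp_bound {Λ : ℂ → ℂ} {M : ℝ} (hM : ∀ z, ‖Λ z‖ ≤ M) (p : ℂ × I) :
    |(1 - (p.2 : ℝ)) * (Λ p.1).re| ≤ M := by
  have h0 := p.2.2.1
  have h1 : 0 ≤ 1 - (p.2 : ℝ) := by linarith [p.2.2.2]
  have h2 := (Complex.abs_re_le_norm (Λ p.1)).trans (hM p.1)
  rw [abs_mul, abs_of_nonneg h1]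
  nlinarith [abs_nonneg (Λ p.1).re]

lemma wmap_zero (Λ : ℂ → ℂ) {d k : ℕ} (hd : d ≠ 0) (hk : k ≠ 0) (n : ℤ) (t : I) :
    wmap Λ d k n (0, t) = 0 := by
  simp [wmap, hd, hk]

lemma continuous_wmap {Λ : ℂ → ℂ} {M : ℝ} (hΛ : ∀ z, z ≠ 0 → ContinuousAt Λ z)
    (hM : ∀ z, ‖Λ z‖ ≤ M) {d k : ℕ} (hd : d ≠ 0) (hk : k ≠ 0) (n : ℤ) :
    Continuous (wmap Λ d k n) := by
  rw [continuous_iff_continuousAt]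
  rintro ⟨z, t⟩
  by_cases hz : z = 0
  · subst hz
    rw [ContinuousAt, wmap_zero Λ hd hk]
    have hb : ∀ p : ℂ × I, ‖wmap Λ d k n p‖ ≤
        ((1 - (p.2 : ℝ)) * ‖p.1‖ ^ d + (p.2 : ℝ) * ‖p.1‖ ^ k) * Real.exp M := by
      rintro ⟨z, t⟩
      by_cases hz : z = 0
      · subst hz
        rw [wmap_zero Λ hd hk]
        simp [hd, hk]
      · rw [norm_wmap Λ d k n (z, t) hz]
        exact mul_le_mul_of_nonneg_left
          (Real.exp_le_exp.2 ((le_abs_self _).trans (wmap_exp_bound hM (z, t))))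
          (wmap_coef_nonneg d k (z, t))
    refine squeeze_zero_norm hb ?_
    have : Continuous fun p : ℂ × I =>
      ((1 - (p.2 : ℝ)) * ‖p.1‖ ^ d + (p.2 : ℝ) * ‖p.1‖ ^ k) * Real.exp M := by fun_prop
    have h := this.tendsto (0, t)
    simpa [hd, hk] using h
  · have h1 : ContinuousAt (fun p : ℂ × I => Λ p.1) (z, t) :=
      ContinuousAt.comp (f := Prod.fst) (g := Λ) (hΛ z hz) continuousAt_fst
    have h2 : ContinuousAt (fun p : ℂ × I => p.1 / ((‖p.1‖ : ℝ) : ℂ)) (z, t) :=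
      continuousAt_fst.div (by fun_prop) (by simpa using hz)
    have h3 : ContinuousAt (fun p : ℂ × I => (p.1 / ((‖p.1‖ : ℝ) : ℂ)) ^ n) (z, t) :=
      h2.zpow₀ n (Or.inl (div_ne_zero hz (by simpa using hz)))
    have h4 : ContinuousAt (fun p : ℂ × I =>
      (((1 - (p.2 : ℝ)) * ‖p.1‖ ^ d + (p.2 : ℝ) * ‖p.1‖ ^ k : ℝ) : ℂ)) (z, t) := by
      refine Continuous.continuousAt ?_
      fun_prop
    have h5 : ContinuousAt (fun p : ℂ × I => ((1 - (p.2 : ℝ) : ℝ) : ℂ)) (z, t) := by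
      refine Continuous.continuousAt ?_
      fun_prop
    exact (h4.mul (h5.mul h1).cexp).mul h3

lemma tendsto_wmap {Λ : ℂ → ℂ} {M : ℝ}
    (hM : ∀ z, ‖Λ z‖ ≤ M) {d k : ℕ} (hd : d ≠ 0) (hk : k ≠ 0) (n : ℤ) (t : I) :
    Tendsto (fun p => ‖wmap Λ d k n p‖) (cocompact ℂ ×ˢ 𝓝 t) atTop := by
  have h1 : Tendsto (fun p : ℂ × I => ‖p.1‖ * Real.exp (-M)) (cocompact ℂ ×ˢ 𝓝 t) atTop :=
    ((tendsto_norm_cocompact_atTop (E := ℂ)).comp tendsto_fst).atTop_mul_const (Real.exp_pos _)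
  refine tendsto_atTop_mono' _ ?_ h1
  have h2 : ∀ᶠ z : ℂ in cocompact ℂ, 1 ≤ ‖z‖ :=
    (tendsto_norm_cocompact_atTop (E := ℂ)).eventually_ge_atTop 1
  filter_upwards [tendsto_fst.eventually h2] with p hp
  have hp0 : p.1 ≠ 0 := norm_pos_iff.1 (by linarith)
  rw [norm_wmap Λ d k n p hp0]
  have e1 : ‖p.1‖ ≤ ‖p.1‖ ^ d := le_self_pow₀ hp hd
  have e2 : ‖p.1‖ ≤ ‖p.1‖ ^ k := le_self_pow₀ hp hk
  have h0 := p.2.2.1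
  have h1 : 0 ≤ 1 - (p.2 : ℝ) := by linarith [p.2.2.2]
  refine mul_le_mul ?_ (Real.exp_le_exp.2 (neg_le_of_abs_le (wmap_exp_bound hM p)))
    (Real.exp_pos _).le (wmap_coef_nonneg d k p)
  nlinarith

lemma conj_unit {z : ℂ} (hz : z ≠ 0) :
    (z / (‖z‖ : ℝ))⁻¹ = (starRingEnd ℂ) z / (‖z‖ : ℝ) := by
  have h : ((‖z‖ : ℝ) : ℂ) ≠ 0 := by simpa using hz
  rw [inv_div, div_eq_div_iff hz h, mul_comm ((starRingEnd ℂ) z), Complex.mul_conj,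
    Complex.normSq_eq_norm_sq]
  push_cast
  ring

lemma wmap_one_pos (Λ : ℂ → ℂ) (d k : ℕ) (hk : k ≠ 0) (z : ℂ) :
    wmap Λ d k (k : ℤ) (z, 1) = z ^ k := by
  by_cases hz : z = 0
  · simp [wmap, hz, hk]
  · have h : ((‖z‖ : ℝ) : ℂ) ≠ 0 := by simpa using hz
    simp only [wmap, zpow_natCast, div_pow]
    simp
    field_simp

lemma wmap_one_neg (Λ : ℂ → ℂ) (d k : ℕ) (hk : k ≠ 0) (z : ℂ) :
    wmap Λ d k (-(k : ℤ)) (z, 1) = (starRingEnd ℂ) z ^ k := by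
  by_cases hz : z = 0
  · simp [wmap, hz, hk]
  · have h : ((‖z‖ : ℝ) : ℂ) ≠ 0 := by simpa using hz
    simp only [wmap]
    rw [zpow_neg, ← inv_zpow, conj_unit hz, zpow_natCast, div_pow]
    simp
    field_simp

lemma stepB (T : ℂ → ℂ) (hTc : Continuous T) (d : ℕ) (hd : d ≠ 0)
    (hhom : ∀ (r : ℝ) (z : ℂ), T (r * z) = (r : ℂ) ^ d * T z)
    (hne : ∀ u, u ≠ 0 → T u ≠ 0) (n : ℤ)
    (hw : IsWindingNumber (fun α : ℝ => T (Complex.exp ((α : ℂ) * Complex.I))) n) :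
    ∃ H : OnePoint ℂ × I → OnePoint ℂ, Continuous H ∧ (∀ x, H (x, 0) = extP T x) ∧
      ∀ x, H (x, 1) = stdSphereMap n x := by
  obtain ⟨Λ, M, hΛ, hM, hTe⟩ := exists_Lam' T hTc d hhom hne n hw
  have hT0 : T 0 = 0 := by
    have := hhom 0 0
    simpa [hd] using this
  have hw0 : ∀ k : ℕ, k ≠ 0 → ∀ z, wmap Λ d k n (z, 0) = T z := by
    intro k hk z
    by_cases hz : z = 0
    · subst hz
      rw [wmap_zero Λ hd hk, hT0]
    · rw [hTe z hz]
      simp [wmap]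
  by_cases hn : n = 0
  · subst hn
    have cw := continuous_wmap hΛ hM hd hd 0
    have hlim := tendsto_wmap hM hd hd 0
    generalize hwd : wmap Λ d d 0 = w at *
    have hw1 : ∀ z, ∃ r : ℝ, 0 ≤ r ∧ w (z, 1) = r := by
      intro z
      refine ⟨‖z‖ ^ d, by positivity, ?_⟩
      rw [← hwd]
      simp [wmap]
    have hw0 : ∀ z, w (z, 0) = T z := by
      intro z
      rw [← hwd]; exact hw0 d hd z
    have hwinv : ∀ t : I, Tendsto (fun p => 1 / w p) (cocompact ℂ ×ˢ 𝓝 t) (𝓝 0) := by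
      intro t
      rw [tendsto_zero_iff_norm_tendsto_zero]
      simp only [one_div, norm_inv]
      exact tendsto_inv_atTop_zero.comp (hlim t)
    have hwne : ∀ t : I, ∀ᶠ p in cocompact ℂ ×ˢ 𝓝 t, w p ≠ 0 := by
      intro t
      filter_upwards [(hlim t).eventually_gt_atTop 0] with p hp
      exact norm_pos_iff.1 hp
    have ht : ∀ t : I, Tendsto (fun p : ℂ × I => ((p.2 : ℝ) : ℂ)) (cocompact ℂ ×ˢ 𝓝 t)
        (𝓝 ((t : ℝ) : ℂ)) := by
      intro t
      have : Continuous (fun t : I => ((t : ℝ) : ℂ)) := by fun_prop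
      exact (this.tendsto t).comp tendsto_snd
    let F : ℂ × I → ℂ := fun p => w p + (p.2 : ℝ)
    let G : ℂ × I → ℂ := fun p => 1 + (p.2 : ℝ) * w p
    have hFw : ∀ t : I, Tendsto (fun p => F p / w p) (cocompact ℂ ×ˢ 𝓝 t) (𝓝 1) := by
      intro t
      have h := ((ht t).mul (hwinv t)).const_add 1
      rw [mul_zero, add_zero] at h
      refine h.congr' ?_
      filter_upwards [hwne t] with p hp
      simp only [F]
      field_simp
    have hGw : ∀ t : I, Tendsto (fun p => G p / w p) (cocompact ℂ ×ˢ 𝓝 t) (𝓝 ((t : ℝ) : ℂ)) := by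
      intro t
      have h := (hwinv t).add (ht t)
      rw [zero_add] at h
      refine h.congr' ?_
      filter_upwards [hwne t] with p hp
      simp only [G]
      field_simp
    have hFG : ∀ p, ¬(F p = 0 ∧ G p = 0) := by
      rintro ⟨z, t⟩ ⟨h1, h2⟩
      simp only [F, G] at h1 h2
      have e1 : w (z, t) = -((t : ℝ) : ℂ) := by linear_combination h1
      rw [e1] at h2
      have e2 : (1 : ℝ) - (t : ℝ) ^ 2 = 0 := by
        have : (((1 : ℝ) - (t : ℝ) ^ 2 : ℝ) : ℂ) = 0 := by
          push_cast; linear_combination h2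
        exact_mod_cast this
      have e3 : (t : ℝ) = 1 := by nlinarith [t.2.1, t.2.2]
      have e4 : t = 1 := Subtype.ext e3
      subst e4
      obtain ⟨r, hr, hrw⟩ := hw1 z
      rw [hrw] at e1
      have e5 := congrArg Complex.re e1
      simp at e5
      linarith
    refine ⟨sph F G (fun t => ((t : ℝ) : ℂ)), continuous_sph (by fun_prop) (by fun_prop)
      (by fun_prop) hFG ?_ ?_, ?_, ?_⟩
    · intro t
      filter_upwards [(hFw t).eventually_ne one_ne_zero] with p hp h0
      apply hp
      rw [h0, zero_div]
    · intro t
      have h1 := (hGw t).div (hFw t) one_ne_zero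
      rw [div_one] at h1
      refine h1.congr' ?_
      filter_upwards [hwne t] with p hp
      simp only [Pi.div_apply]
      rw [div_div_div_cancel_right₀ hp]
    · intro x
      induction x using OnePoint.rec with
      | infty => simp [sph, extP, toP_zero]
      | coe z => simp [sph, F, G, extP, toP_one, hw0]
    · intro x
      rw [std_zero]
      induction x using OnePoint.rec with
      | infty => simp [sph, toP_one]
      | coe z =>
        obtain ⟨r, hr, hrw⟩ := hw1 z
        have h : (1 + r : ℂ) ≠ 0 := by
          have : (1 + r : ℝ) ≠ 0 := by positivity
          exact_mod_cast this
        simp only [sph, F, G, OnePoint.elim_some, hrw]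
        simp only [Set.Icc.coe_one, Complex.ofReal_one, one_mul]
        rw [toP_of_ne h, add_comm (r : ℂ), div_self h]
  · have hk : n.natAbs ≠ 0 := by simpa using hn
    have cw := continuous_wmap hΛ hM hd hk n
    have hlim := tendsto_wmap hM hd hk n
    refine ⟨sph (wmap Λ d n.natAbs n) (fun _ => 1) (fun _ => 0), continuous_sph cw (by fun_prop)
      (by fun_prop) (by simp) ?_ ?_, ?_, ?_⟩
    · intro t
      filter_upwards [(hlim t).eventually_gt_atTop 0] with p hp
      exact norm_pos_iff.1 hp
    · intro t
      rw [tendsto_zero_iff_norm_tendsto_zero]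
      simp only [one_div, norm_inv]
      exact tendsto_inv_atTop_zero.comp (hlim t)
    · intro x
      induction x using OnePoint.rec with
      | infty => simp [sph, extP, toP_zero]
      | coe z => simp [sph, extP, toP_one, hw0 _ hk]
    · intro x
      induction x using OnePoint.rec with
      | infty => simp [sph, toP_zero, std_infty hn]
      | coe z =>
        simp only [sph, OnePoint.elim_some, toP_one]
        rcases lt_or_gt_of_ne hn with h | h
        · rw [std_neg h]
          have e : n = -(n.natAbs : ℤ) := by omega
          have e2 : (-n).toNat = n.natAbs := by omega
          rw [e2, ← wmap_one_neg Λ d n.natAbs hk z, ← e]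
        · rw [std_pos h]
          have e : n = (n.natAbs : ℤ) := by omega
          have e2 : n.toNat = n.natAbs := by omega
          rw [e2, ← wmap_one_pos Λ d n.natAbs hk z, ← e]

lemma glue {f g h : OnePoint ℂ → OnePoint ℂ} (hf : Continuous f)
    (h1 : ∃ H : OnePoint ℂ × I → OnePoint ℂ, Continuous H ∧ (∀ x, H (x, 0) = f x) ∧
      ∀ x, H (x, 1) = g x)
    (h2 : ∃ H : OnePoint ℂ × I → OnePoint ℂ, Continuous H ∧ (∀ x, H (x, 0) = g x) ∧
      ∀ x, H (x, 1) = h x) :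
    ∃ H : OnePoint ℂ × I → OnePoint ℂ, Continuous H ∧ (∀ x, H (x, 0) = f x) ∧
      ∀ x, H (x, 1) = h x := by
  obtain ⟨H1, c1, a1, b1⟩ := h1
  obtain ⟨H2, c2, a2, b2⟩ := h2
  have hg : Continuous g := by
    have : g = fun x => H1 (x, 1) := funext fun x => (b1 x).symm
    rw [this]; fun_prop
  have hh : Continuous h := by
    have : h = fun x => H2 (x, 1) := funext fun x => (b2 x).symm
    rw [this]; fun_prop
  let K1 : ContinuousMap.Homotopy (⟨f, hf⟩ : C(OnePoint ℂ, OnePoint ℂ)) ⟨g, hg⟩ :=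
    { toFun := fun p => H1 (p.2, p.1)
      continuous_toFun := by fun_prop
      map_zero_left := a1
      map_one_left := b1 }
  let K2 : ContinuousMap.Homotopy (⟨g, hg⟩ : C(OnePoint ℂ, OnePoint ℂ)) ⟨h, hh⟩ :=
    { toFun := fun p => H2 (p.2, p.1)
      continuous_toFun := by fun_prop
      map_zero_left := a2
      map_one_left := b2 }
  let K := K1.trans K2
  refine ⟨fun p => K (p.2, p.1), by fun_prop, fun x => ?_, fun x => ?_⟩
  · exact K.apply_zero x
  · exact K.apply_one x

lemma exists_winding {γ : ℂ → ℂ} (hγ : Continuous γ) (hne : ∀ u, u ≠ 0 → γ u ≠ 0) :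
    ∃ m, IsWindingNumber (fun α : ℝ => γ (Complex.exp ((α : ℂ) * Complex.I))) m := by
  obtain ⟨l, hl, hle⟩ := exists_clog (A := ℝ)
    (q := fun α : ℝ => γ (Complex.exp ((α : ℂ) * Complex.I))) (by fun_prop)
    (fun α => hne _ (Complex.exp_ne_zero _))
  have hp : Complex.exp (l (2 * Real.pi)) = Complex.exp (l 0) := by
    rw [hle, hle]
    simp
  obtain ⟨m, hm⟩ := Complex.exp_eq_exp_iff_exists_int.1 hp
  refine ⟨m, fun α => (l α).im, by fun_prop, ?_, ?_⟩
  · intro α _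
    beta_reduce
    rw [← hle α, Complex.norm_exp, Complex.ofReal_exp, ← Complex.exp_add, Complex.re_add_im]
  · have := congrArg Complex.im hm
    simp at this
    beta_reduce
    rw [this]; ring

/-- **Theorem 2 (winding-number form).**  Let `R = f(z,z̄)/g(z,z̄)` with `f, g`
polynomials in `z` and `z̄` without common zeros, `deg f ≥ deg g`, `d = deg f`, and
let `T` be the top homogeneous component of `f` (of degree `d`); assume
`|T(z,z̄)| → ∞` as `|z| → ∞`.  Let `R : ℂ̄ → ℂ̄` be the continuous map equal to `f/g`
where `g ≠ 0`, to `∞` where `g = 0`, and to `lim_{|z|→∞} f/g` at `∞` (this limit is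
the value forced by continuity).  Then the degree of the map `R` equals the winding
number about `0` of the loop `α ↦ T(e^{iα}, e^{-iα})`, `α ∈ [0, 2π]`. -/
theorem degree_eq_winding_number_of_top_component
    (f g : MvPolynomial (Fin 2) ℂ)
    (hfg : ∀ z : ℂ, ¬(evalZZbar f z = 0 ∧ evalZZbar g z = 0))
    (hdeg : g.totalDegree ≤ f.totalDegree)
    (d : ℕ) (hd : d = f.totalDegree)
    (T : MvPolynomial (Fin 2) ℂ) (hT : T = MvPolynomial.homogeneousComponent d f)
    (hTinf : Tendsto (fun z : ℂ => ‖evalZZbar T z‖) (cocompact ℂ) atTop)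
    (R : OnePoint ℂ → OnePoint ℂ) (hRcont : Continuous R)
    (hR₁ : ∀ z : ℂ, evalZZbar g z ≠ 0 →
      R z = ((evalZZbar f z / evalZZbar g z : ℂ) : OnePoint ℂ))
    (hR₂ : ∀ z : ℂ, evalZZbar g z = 0 → R z = ∞) :
    ∀ n : ℤ, HasDegree R n ↔
      IsWindingNumber
        (fun α : ℝ => evalZZbar T (Complex.exp ((α : ℂ) * Complex.I))) n := by
  have hhT : T.IsHomogeneous d := by
    rw [hT]; exact MvPolynomial.homogeneousComponent_isHomogeneous d f
  have hne : ∀ u, u ≠ 0 → evalZZbar T u ≠ 0 := fun u hu => T_ne_zero hhT hTinf hu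
  have hd1 : d ≠ 0 := by
    have := d_pos hhT hTinf
    omega
  have hTc : Continuous (evalZZbar T) := (contDiff_evalZZbar T).continuous
  have hRP : ∀ z : ℂ, R z = toP (evalZZbar f z) (evalZZbar g z) := by
    intro z
    by_cases hz : evalZZbar g z = 0
    · rw [hz, toP_zero, hR₂ z hz]
    · rw [toP_of_ne hz, hR₁ z hz]
  have hA := stepA (contDiff_evalZZbar f) (contDiff_evalZZbar g) (contDiff_evalZZbar T) hfg hTinf
    (tendsto_f_T f hd hT hTinf) (bound_g hhT hTinf g (hd ▸ hdeg)) R hRcont hRP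
  have key : ∀ n : ℤ, IsWindingNumber
      (fun α : ℝ => evalZZbar T (Complex.exp ((α : ℂ) * Complex.I))) n → HasDegree R n := by
    intro n hn
    exact glue hRcont hA (stepB (evalZZbar T) hTc d hd1 (evalZZbar_homog hhT) hne n hn)
  intro n
  refine ⟨fun h => ?_, key n⟩
  obtain ⟨m, hm⟩ := exists_winding hTc hne
  rw [h.unique (key m hm)]
  exact hm
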